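/- The spectrum of U(s,r,s) as a bounded operator on ℓ_p (1 < p < ∞) equals the segment [r − 2s, r + 2s] = {r + 2s·cos θ : θ ∈ [0, 2π]}. -/

import Mathlib

open scoped ENNReal
open Real Set

/-- The tridiagonal operator U(s,r,s) acting on sequences, with x_{-1} = 0. -/
noncomputable def Ufun (s r : ℂ) (x : ℕ → ℂ) : ℕ → ℂ :=
  fun k => (if k = 0 then 0 else s * x (k - 1)) + r * x k + s * x (k + 1)

/-!
On sequences `U(s, r, s) = r + s (L + R)`, where the left shift `L` and the right shift `R` are
contractions with `L R = 1 ≠ R L`, so it suffices to find the spectrum of `L + R` in a Banach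
algebra. Every complex number is of the form `z + z⁻¹` with `0 < ‖z‖ ≤ 1`, and
`z + z⁻¹ - (L + R) = z⁻¹ (1 - z L) (1 - z R)`. If `‖z‖ < 1`, both factors are invertible. If
`‖z‖ = 1`, the factor `1 - z R` is a limit of units, so the product can only be a unit if `1 - z L`
is one; but `(μ - L) R = μ R - 1` shows that the spectrum of `L` contains the open unit disc, hence
the closed one. So the spectrum of `L + R` is the image of the unit circle under `z ↦ z + z⁻¹`.
-/

open Metric
open scoped lp Pointwise

section Joukowski

theorem exists_add_inv_eq (m : ℂ) : ∃ z : ℂ, z ≠ 0 ∧ ‖z‖ ≤ 1 ∧ z + z⁻¹ = m := by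
  obtain ⟨d, hd⟩ := IsAlgClosed.exists_pow_nat_eq (m ^ 2 - 4) two_pos
  have hmul : (m + d) / 2 * ((m - d) / 2) = 1 := by linear_combination -hd / 4
  have hz : (m + d) / 2 ≠ 0 := left_ne_zero_of_mul_eq_one hmul
  have hinv : ((m + d) / 2)⁻¹ = (m - d) / 2 := inv_eq_of_mul_eq_one_right hmul
  have hadd : (m + d) / 2 + ((m + d) / 2)⁻¹ = m := by rw [hinv]; ring
  rcases le_total ‖(m + d) / 2‖ 1 with h | h
  · exact ⟨_, hz, h, hadd⟩
  · refine ⟨_, inv_ne_zero hz, ?_, by rw [inv_inv, add_comm, hadd]⟩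
    rw [norm_inv]
    exact inv_le_one_of_one_le₀ h

theorem image_two_mul_cos_Icc :
    (fun θ : ℝ => 2 * Real.cos θ) '' Icc 0 (2 * π) = Icc (-2) 2 := by
  apply Subset.antisymm
  · rintro _ ⟨θ, -, rfl⟩
    constructor <;> linarith [Real.neg_one_le_cos θ, Real.cos_le_one θ]
  · rintro t ⟨ht, ht'⟩
    obtain ⟨θ, ⟨hθ, hθ'⟩, hcos⟩ :=
      Real.surjOn_cos (show t / 2 ∈ Icc (-1) 1 from ⟨by linarith, by linarith⟩)
    refine ⟨θ, ⟨hθ, by linarith⟩, ?_⟩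
    simp only [hcos]
    ring

theorem setOf_add_mul_eq_setOf_add_two_mul_cos (r s : ℂ) :
    {lam : ℂ | ∃ t ∈ Icc (-2 : ℝ) 2, lam = r + t * s} =
      {lam : ℂ | ∃ θ ∈ Icc (0 : ℝ) (2 * π), lam = r + 2 * s * Real.cos θ} := by
  ext lam
  rw [← image_two_mul_cos_Icc]
  simp only [mem_ofPred_eq, exists_mem_image, Complex.ofReal_mul, Complex.ofReal_ofNat,
    mul_right_comm (2 : ℂ)]

theorem image_add_inv_sphere :
    (fun z : ℂ => z + z⁻¹) '' sphere 0 1 = ((↑) : ℝ → ℂ) '' Icc (-2) 2 := by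
  apply Subset.antisymm
  · rintro _ ⟨z, hz, rfl⟩
    rw [mem_sphere_zero_iff_norm] at hz
    obtain ⟨hre, hre'⟩ := abs_le.1 (hz ▸ Complex.abs_re_le_norm z)
    refine ⟨2 * z.re, ⟨by linarith, by linarith⟩, ?_⟩
    simp only [Complex.inv_eq_conj hz, Complex.add_conj]
  · rw [← image_two_mul_cos_Icc]
    rintro _ ⟨_, ⟨θ, -, rfl⟩, rfl⟩
    refine ⟨Complex.exp (θ * Complex.I), by simp [Complex.norm_exp_ofReal_mul_I], ?_⟩
    simp [← Complex.exp_neg, Complex.two_cos]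

end Joukowski

section Units

variable {A : Type*} [NormedRing A] [CompleteSpace A]

theorem isUnit_left_of_isUnit_mul_of_mem_closure {a b : A} (hab : IsUnit (a * b))
    (hb : b ∈ closure {x : A | IsUnit x}) : IsUnit a := by
  have hopen : IsOpen {x : A | IsUnit (a * x)} :=
    Units.isOpen.preimage (continuous_const_mul a)
  obtain ⟨_, hau, u, rfl⟩ := mem_closure_iff.1 hb _ hopen hab
  exact (Units.isUnit_mul_units a u).1 hau

variable {𝕜 : Type*} [NormedField 𝕜] [NormedAlgebra 𝕜 A] {a : A}

theorem isUnit_one_sub_smul (ha : ‖a‖ ≤ 1) {z : 𝕜} (hz : ‖z‖ < 1) : IsUnit (1 - z • a) :=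
  isUnit_one_sub_of_norm_lt_one <| (norm_smul_le z a).trans_lt <|
    (mul_le_of_le_one_right (norm_nonneg z) ha).trans_lt hz

end Units

section OneSidedInverse

variable {𝕜 A : Type*}

theorem algebraMap_add_inv_sub_add [Field 𝕜] [Ring A] [Algebra 𝕜 A] {a b : A} (hab : a * b = 1)
    {z : 𝕜} (hz : z ≠ 0) :
    algebraMap 𝕜 A (z + z⁻¹) - (a + b) = z⁻¹ • ((1 - z • a) * (1 - z • b)) := by
  have hexpand : (1 - z • a) * (1 - z • b) = 1 - z • b - z • a + (z * z) • (1 : A) := by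
    rw [sub_mul, one_mul, mul_sub, mul_one, smul_mul_smul_comm, hab]
    abel
  rw [hexpand, Algebra.algebraMap_eq_smul_one]
  match_scalars <;> field_simp
  all_goals ring

variable [RCLike 𝕜] [NormedRing A] [NormedAlgebra 𝕜 A] [CompleteSpace A] {a b : A}

theorem one_sub_smul_mem_closure_isUnit (ha : ‖a‖ ≤ 1) {z : 𝕜} (hz : ‖z‖ ≤ 1) :
    1 - z • a ∈ closure {x : A | IsUnit x} := by
  have hz' : z ∈ closure (ball (0 : 𝕜) 1) := by
    rwa [closure_ball 0 one_ne_zero, mem_closedBall_zero_iff]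
  exact map_mem_closure (f := fun z : 𝕜 => 1 - z • a) (by fun_prop) hz'
    fun w hw => isUnit_one_sub_smul ha (mem_ball_zero_iff.1 hw)

theorem closedBall_subset_spectrum (hab : a * b = 1) (hba : b * a ≠ 1) (hb : ‖b‖ ≤ 1) :
    closedBall 0 1 ⊆ spectrum 𝕜 a := by
  rw [← closure_ball (0 : 𝕜) one_ne_zero]
  refine closure_minimal (fun μ hμ hres => hba ?_) (spectrum.isClosed a)
  have hmul : IsUnit ((algebraMap 𝕜 A μ - a) * b) := by
    rw [sub_mul, hab, ← Algebra.smul_def, ← IsUnit.neg_iff, neg_sub]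
    exact isUnit_one_sub_smul hb (mem_ball_zero_iff.1 hμ)
  obtain ⟨u, rfl⟩ : IsUnit b := (spectrum.mem_resolventSet_iff.1 hres).mul_left_iff.1 hmul
  exact Units.mul_eq_one_iff_inv_eq.2 (Units.mul_eq_one_iff_eq_inv.1 hab).symm

theorem not_isUnit_one_sub_smul (hab : a * b = 1) (hba : b * a ≠ 1) (hb : ‖b‖ ≤ 1) {z : 𝕜}
    (hz : 1 ≤ ‖z‖) : ¬IsUnit (1 - z • a) := by
  have hz0 : z ≠ 0 := norm_pos_iff.1 (one_pos.trans_le hz)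
  have hspec : z⁻¹ ∈ spectrum 𝕜 a := closedBall_subset_spectrum hab hba hb <| by
    rw [mem_closedBall_zero_iff, norm_inv]
    exact inv_le_one_of_one_le₀ hz
  have hsmul : 1 - z • a = Units.mk0 z hz0 • (algebraMap 𝕜 A z⁻¹ - a) := by
    rw [Units.smul_mk0, smul_sub, Algebra.algebraMap_eq_smul_one, smul_inv_smul₀ hz0]
  rwa [hsmul, isUnit_smul_iff]

theorem add_inv_mem_spectrum_add_iff (hab : a * b = 1) (hba : b * a ≠ 1) (ha : ‖a‖ ≤ 1)
    (hb : ‖b‖ ≤ 1) {z : 𝕜} (hz0 : z ≠ 0) (hz : ‖z‖ ≤ 1) :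
    z + z⁻¹ ∈ spectrum 𝕜 (a + b) ↔ ‖z‖ = 1 := by
  have hunit : IsUnit (algebraMap 𝕜 A (z + z⁻¹) - (a + b)) ↔
      IsUnit ((1 - z • a) * (1 - z • b)) := by
    rw [algebraMap_add_inv_sub_add hab hz0]
    exact isUnit_smul_iff (Units.mk0 z⁻¹ (inv_ne_zero hz0)) _
  rw [spectrum.mem_iff, hunit]
  constructor
  · contrapose!
    intro hne
    have hlt : ‖z‖ < 1 := hz.lt_of_ne hne
    exact (isUnit_one_sub_smul ha hlt).mul (isUnit_one_sub_smul hb hlt)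
  · exact fun heq hmul => not_isUnit_one_sub_smul hab hba hb heq.ge <|
      isUnit_left_of_isUnit_mul_of_mem_closure hmul (one_sub_smul_mem_closure_isUnit hb hz)

theorem spectrum_add_eq_image_Icc [NormedAlgebra ℂ A] (hab : a * b = 1) (hba : b * a ≠ 1)
    (ha : ‖a‖ ≤ 1) (hb : ‖b‖ ≤ 1) :
    spectrum ℂ (a + b) = ((↑) : ℝ → ℂ) '' Icc (-2) 2 := by
  rw [← image_add_inv_sphere]
  ext m
  constructor
  · intro hm
    obtain ⟨z, hz0, hz, rfl⟩ := exists_add_inv_eq m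
    exact ⟨z, mem_sphere_zero_iff_norm.2
      ((add_inv_mem_spectrum_add_iff hab hba ha hb hz0 hz).1 hm), rfl⟩
  · rintro ⟨z, hz, rfl⟩
    have hz_one : ‖z‖ = 1 := mem_sphere_zero_iff_norm.1 hz
    exact (add_inv_mem_spectrum_add_iff hab hba ha hb (ne_zero_of_mem_unit_sphere ⟨z, hz⟩)
      hz_one.le).2 hz_one

theorem spectrum_algebraMap_add_smul_add [NormedAlgebra ℂ A] (hab : a * b = 1)
    (hba : b * a ≠ 1) (ha : ‖a‖ ≤ 1) (hb : ‖b‖ ≤ 1) (r s : ℂ) :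
    spectrum ℂ (algebraMap ℂ A r + s • (a + b)) =
      {lam : ℂ | ∃ t ∈ Icc (-2 : ℝ) 2, lam = r + t * s} := by
  have : Nontrivial A := nontrivial_of_ne _ _ hba
  rw [← spectrum.vadd_eq, spectrum.smul_eq_smul _ _ (spectrum.nonempty _),
    spectrum_add_eq_image_Icc hab hba ha hb]
  ext lam
  simp only [mem_vadd_set, mem_smul_set, exists_mem_image, exists_exists_and_eq_and, smul_eq_mul,
    vadd_eq_add, mem_ofPred_eq, mul_comm s, eq_comm (a := lam)]

end OneSidedInverse

section Reindexing

variable {ι κ E : Type*} [NormedAddCommGroup E] {p : ℝ≥0∞} {f : ι → κ}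

theorem memℓp_comp (hf : f.Injective) {x : κ → E} (hx : Memℓp x p) :
    Memℓp (fun i => x (f i)) p := by
  rcases p.trichotomy with rfl | rfl | hp
  · exact memℓp_zero (hx.finite_dsupport.preimage hf.injOn)
  · exact memℓp_infty (hx.bddAbove.mono (range_comp_subset_range f fun j => ‖x j‖))
  · exact memℓp_gen ((hx.summable hp).comp_injective hf)

theorem norm_extend_zero_rpow (x : ι → E) {q : ℝ} (hq : q ≠ 0) :
    (fun j => ‖Function.extend f x 0 j‖ ^ q) = Function.extend f (fun i => ‖x i‖ ^ q) 0 := by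
  have hzero : (fun y : E => ‖y‖ ^ q) ∘ (0 : κ → E) = 0 := by
    ext
    simp [hq]
  ext j
  rw [Function.apply_extend (fun y : E => ‖y‖ ^ q), hzero]
  rfl

theorem norm_extend_zero_le {x : ι → E} {C : ℝ} (hC : 0 ≤ C) (hx : ∀ i, ‖x i‖ ≤ C) (j : κ) :
    ‖Function.extend f x 0 j‖ ≤ C := by
  classical
  rw [Function.extend_def]
  split_ifs
  · exact hx _
  · simpa only [Pi.zero_apply, norm_zero] using hC

theorem memℓp_extend_zero (hf : f.Injective) {x : ι → E} (hx : Memℓp x p) :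
    Memℓp (Function.extend f x 0) p := by
  rcases p.trichotomy with rfl | rfl | hp
  · refine memℓp_zero ((hx.finite_dsupport.image f).subset ?_)
    exact Function.support_extend_zero_subset
  · obtain ⟨C, hC⟩ := hx.bddAbove
    refine memℓp_infty ⟨max C 0, forall_mem_range.2 ?_⟩
    exact norm_extend_zero_le (le_max_right _ _)
      fun i => (hC (mem_range_self i)).trans (le_max_left _ _)
  · refine memℓp_gen ?_
    rw [norm_extend_zero_rpow x hp.ne']
    exact (summable_extend_zero hf).2 (hx.summable hp)

variable (𝕜 : Type*) [NormedField 𝕜] [NormedSpace 𝕜 E] [Fact (1 ≤ p)]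

/-- The operator `x ↦ x ∘ f` from `ℓ^p(κ, E)` to `ℓ^p(ι, E)` for an injective `f : ι → κ`. For
`f = Nat.succ` this is the left shift. -/
noncomputable def lpComp (hf : f.Injective) : ℓ^p(κ, E) →L[𝕜] ℓ^p(ι, E) :=
  LinearMap.mkContinuous
    { toFun := fun x => ⟨fun i => x (f i), memℓp_comp hf (lp.memℓp x)⟩
      map_add' := fun _ _ => rfl
      map_smul' := fun _ _ => rfl } 1 <| fun x => by
    rw [one_mul]
    rcases p.dichotomy with rfl | hp
    · exact lp.norm_le_of_forall_le (norm_nonneg x)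
        fun i => lp.norm_apply_le_norm ENNReal.top_ne_zero x (f i)
    · have hp0 : 0 < p.toReal := one_pos.trans_le hp
      refine lp.norm_le_of_tsum_le hp0 (norm_nonneg x) ?_
      rw [lp.norm_rpow_eq_tsum hp0]
      exact tsum_comp_le_tsum_of_inj ((lp.memℓp x).summable hp0) (fun _ => by positivity) hf

theorem lpComp_apply (hf : f.Injective) (x : ℓ^p(κ, E)) (i : ι) :
    lpComp 𝕜 hf x i = x (f i) := rfl

theorem norm_lpComp_le (𝕜 : Type*) [NontriviallyNormedField 𝕜] [NormedSpace 𝕜 E]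
    (hf : f.Injective) :
    ‖(lpComp 𝕜 hf : ℓ^p(κ, E) →L[𝕜] ℓ^p(ι, E))‖ ≤ 1 :=
  LinearMap.mkContinuous_norm_le _ zero_le_one _

/-- Extension by zero along an injective `f : ι → κ`, as an operator from `ℓ^p(ι, E)` to
`ℓ^p(κ, E)`. For `f = Nat.succ` this is the right shift. -/
noncomputable def lpExtend (hf : f.Injective) : ℓ^p(ι, E) →L[𝕜] ℓ^p(κ, E) :=
  LinearMap.mkContinuous
    { toFun := fun x => ⟨Function.extend f x 0, memℓp_extend_zero hf (lp.memℓp x)⟩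
      map_add' := fun x y => lp.ext <| by
        change Function.extend f (⇑x + ⇑y) 0 = Function.extend f x 0 + Function.extend f y 0
        rw [← Function.extend_add, add_zero]
      map_smul' := fun c x => lp.ext <| by
        change Function.extend f (c • ⇑x) 0 = c • Function.extend f x 0
        rw [← Function.extend_smul, smul_zero] } 1 <| fun x => by
    rw [one_mul]
    rcases p.dichotomy with rfl | hp
    · exact lp.norm_le_of_forall_le (norm_nonneg x) <|
        norm_extend_zero_le (norm_nonneg x) (lp.norm_apply_le_norm ENNReal.top_ne_zero x)
    · have hp0 : 0 < p.toReal := one_pos.trans_le hp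
      refine lp.norm_le_of_tsum_le hp0 (norm_nonneg x) ?_
      have htsum : ∑' j, ‖Function.extend f (⇑x) 0 j‖ ^ p.toReal = ∑' i, ‖x i‖ ^ p.toReal := by
        rw [norm_extend_zero_rpow (⇑x) hp0.ne', tsum_extend_zero hf]
      exact htsum.trans_le (lp.norm_rpow_eq_tsum hp0 x).ge

theorem lpExtend_apply (hf : f.Injective) (x : ℓ^p(ι, E)) (i : ι) :
    lpExtend 𝕜 hf x (f i) = x i :=
  hf.extend_apply _ _ _

theorem lpExtend_apply_of_notMem_range (hf : f.Injective) (x : ℓ^p(ι, E)) {j : κ}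
    (hj : j ∉ range f) : lpExtend 𝕜 hf x j = 0 :=
  Function.extend_apply' _ _ _ hj

theorem norm_lpExtend_le (𝕜 : Type*) [NontriviallyNormedField 𝕜] [NormedSpace 𝕜 E]
    (hf : f.Injective) :
    ‖(lpExtend 𝕜 hf : ℓ^p(ι, E) →L[𝕜] ℓ^p(κ, E))‖ ≤ 1 :=
  LinearMap.mkContinuous_norm_le _ zero_le_one _

theorem lpComp_comp_lpExtend (hf : f.Injective) :
    (lpComp 𝕜 hf).comp (lpExtend 𝕜 hf) = ContinuousLinearMap.id 𝕜 ℓ^p(ι, E) := by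
  ext x i
  exact lpExtend_apply 𝕜 hf x i

theorem lpExtend_comp_lpComp_ne_id [Nontrivial E] (hf : f.Injective) (hsurj : ¬f.Surjective) :
    (lpExtend 𝕜 hf).comp (lpComp 𝕜 hf) ≠ ContinuousLinearMap.id 𝕜 ℓ^p(κ, E) := by
  classical
  intro hid
  obtain ⟨j, hj⟩ := not_forall.1 hsurj
  obtain ⟨e, he⟩ := exists_ne (0 : E)
  have hsingle : lpExtend 𝕜 hf (lpComp 𝕜 hf (lp.single p j e)) j =
      lp.single (E := fun _ : κ => E) p j e j :=
    congrArg (fun S : ℓ^p(κ, E) →L[𝕜] ℓ^p(κ, E) => S (lp.single p j e) j) hid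
  rw [lpExtend_apply_of_notMem_range 𝕜 hf _ hj, lp.single_apply_self] at hsingle
  exact he hsingle.symm

end Reindexing

theorem eq_algebraMap_add_smul_lpComp_add_lpExtend {r s : ℂ} {p : ℝ≥0∞} [Fact (1 ≤ p)]
    {T : ℓ^p(ℕ, ℂ) →L[ℂ] ℓ^p(ℕ, ℂ)}
    (hT : ∀ (x : ℓ^p(ℕ, ℂ)) (k : ℕ), T x k = Ufun s r (⇑x) k) :
    T = algebraMap ℂ _ r +
      s • (lpComp ℂ Nat.succ_injective + lpExtend ℂ Nat.succ_injective) := by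
  ext x k
  have hright : lpExtend ℂ Nat.succ_injective x k = if k = 0 then 0 else x (k - 1) := by
    rcases k with _ | k
    · exact lpExtend_apply_of_notMem_range ℂ _ x (by simp)
    · exact lpExtend_apply ℂ Nat.succ_injective x k
  simp only [hT, Ufun, add_apply, smul_apply, ContinuousLinearMap.algebraMap_apply,
    lp.coeFn_add, lp.coeFn_smul, Pi.add_apply, Pi.smul_apply, smul_eq_mul, lpComp_apply, hright,
    Nat.succ_eq_add_one]
  split_ifs <;> ring

theorem stmt8_general (r s : ℂ) (p : ℝ≥0∞) [Fact (1 ≤ p)]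
    (T : lp (fun _ : ℕ => ℂ) p →L[ℂ] lp (fun _ : ℕ => ℂ) p)
    (hT : ∀ (x : lp (fun _ : ℕ => ℂ) p) (k : ℕ), T x k = Ufun s r ↑x k) :
    spectrum ℂ T = {lam : ℂ | ∃ t ∈ Icc (-2 : ℝ) 2, lam = r + t * s} ∧
      spectrum ℂ T =
        {lam : ℂ | ∃ θ ∈ Icc (0 : ℝ) (2 * π), lam = r + 2 * s * Real.cos θ} := by
  rw [← setOf_add_mul_eq_setOf_add_two_mul_cos, and_self,
    eq_algebraMap_add_smul_lpComp_add_lpExtend hT]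
  exact spectrum_algebraMap_add_smul_add (lpComp_comp_lpExtend ℂ _)
    (lpExtend_comp_lpComp_ne_id ℂ _ fun hsurj => (hsurj 0).elim Nat.succ_ne_zero)
    (norm_lpComp_le ℂ _) (norm_lpExtend_le ℂ _) r s

/-- The spectrum of U(s,r,s) on ℓ_p equals the segment
[r − 2s, r + 2s] = {r + 2s cos θ : θ ∈ [0, 2π]}. -/
theorem stmt8 (r s : ℝ) (hs : s ≠ 0) (p : ℝ≥0∞) (hp : 1 < p) (hp' : p ≠ ∞) [Fact (1 ≤ p)]
    (T : lp (fun _ : ℕ => ℂ) p →L[ℂ] lp (fun _ : ℕ => ℂ) p)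
    (hT : ∀ (x : lp (fun _ : ℕ => ℂ) p) (k : ℕ),
      T x k = Ufun (s : ℂ) (r : ℂ) ↑x k) :
    spectrum ℂ T = {lam : ℂ | ∃ t ∈ Icc (-2 : ℝ) 2, lam = r + t * s} ∧
      spectrum ℂ T =
        {lam : ℂ | ∃ θ ∈ Icc (0 : ℝ) (2 * π), lam = r + 2 * s * Real.cos θ} :=
  stmt8_general r s p T hT
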